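/- Let 0 < α < 1, s ≥ 1, f ≥ 1. Consider the system of three linear equations in unknowns X0, X1, Xm: X0 = α(X1+1) + (1−α)(Xm+1); X1 = ∑_{k=1}^{s−1} α^k + (1−α)(1+Xm)·∑_{k=0}^{s−2} α^k; Xm = ∑_{k=1}^{f−1} (1−α)^k + α(1+X1)·∑_{k=0}^{f−2} (1−α)^k. If s > 1 and f > 1, then the unique solution satisfies X0 = (∑_{j=0}^{s−1} α^j)(∑_{j=0}^{f−1} (1−α)^j) / (1 − (∑_{j=1}^{s−1} α^j)(∑_{j=1}^{f−1} (1−α)^j)). -/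

import Mathlib

/-!
Let `U = X1 + 1`, `V = Xm + 1`, and let `S`, `T` be the geometric sums of lengths `s`, `f` in `α`
and `1 - α`. Substituting the equation for `X1` into the one for `X0` gives the factorisation
`X0 = S * (α + (1 - α) * V)`; exchanging successes and failures gives `X0 = T * (1 - α + α * U)`.
The two cofactors add up to `1 + X0`, so `X0 * T + X0 * S = S * T * (1 + X0)`, which is the formula
because `S + T - S * T = 1 - (S - 1) * (T - 1)`. The denominator does not vanish, since
`(S - 1) * (T - 1) = (1 - α ^ (s - 1)) * (1 - (1 - α) ^ (f - 1)) < 1`.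
-/

theorem sum_Icc_one_pow_eq_mul_geom_sum {R : Type*} [Semiring R] (x : R) (n : ℕ) :
    ∑ k ∈ Finset.Icc 1 n, x ^ k = x * ∑ k ∈ Finset.range n, x ^ k := by
  simp only [Finset.mul_sum, ← pow_succ', Finset.range_eq_Ico]
  exact (Finset.sum_Ico_add' (fun k ↦ x ^ k) 0 n 1).symm

theorem sum_Icc_one_pow_eq_geom_sum_sub_one {R : Type*} [Ring R] (x : R) (n : ℕ) :
    ∑ k ∈ Finset.Icc 1 n, x ^ k = ∑ k ∈ Finset.range (n + 1), x ^ k - 1 := by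
  rw [sum_Icc_one_pow_eq_mul_geom_sum, geom_sum_succ, add_sub_cancel_right]

theorem sum_Icc_one_pow_mul_sum_Icc_one_one_sub_pow {R : Type*} [CommRing R] (x : R) (m n : ℕ) :
    (∑ k ∈ Finset.Icc 1 m, x ^ k) * (∑ k ∈ Finset.Icc 1 n, (1 - x) ^ k)
      = (1 - x ^ m) * (1 - (1 - x) ^ n) := by
  rw [sum_Icc_one_pow_eq_mul_geom_sum, sum_Icc_one_pow_eq_mul_geom_sum, ← mul_neg_geom_sum x m,
    ← mul_neg_geom_sum (1 - x) n]
  ring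

theorem sum_Icc_one_pow_mul_sum_Icc_one_one_sub_pow_lt_one {R : Type*} [CommRing R] [LinearOrder R]
    [IsStrictOrderedRing R] {x : R} (hx0 : 0 ≤ x) (hx1 : x ≤ 1) (m n : ℕ) :
    (∑ k ∈ Finset.Icc 1 m, x ^ k) * (∑ k ∈ Finset.Icc 1 n, (1 - x) ^ k) < 1 := by
  rw [sum_Icc_one_pow_mul_sum_Icc_one_one_sub_pow]
  have hy0 : 0 ≤ 1 - x := sub_nonneg.mpr hx1
  have hm : 0 ≤ 1 - x ^ m := sub_nonneg.mpr (pow_le_one₀ hx0 hx1)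
  have hn : 1 - (1 - x) ^ n ≤ 1 := sub_le_self 1 (pow_nonneg hy0 n)
  rcases hx0.eq_or_lt with rfl | hx
  · simp
  · calc (1 - x ^ m) * (1 - (1 - x) ^ n) ≤ 1 - x ^ m := mul_le_of_le_one_right hm hn
      _ < 1 := sub_lt_self 1 (pow_pos hx m)

theorem eq_geom_sum_mul_of_first_step {R : Type*} [CommSemiring R] {p q x y z : R} {n : ℕ}
    (hx : x = p * (y + 1) + q * (z + 1))
    (hy : y = (∑ k ∈ Finset.Icc 1 n, p ^ k) + q * (1 + z) * (∑ k ∈ Finset.range n, p ^ k)) :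
    x = (∑ k ∈ Finset.range (n + 1), p ^ k) * (p + q * (z + 1)) := by
  rw [sum_Icc_one_pow_eq_mul_geom_sum] at hy
  rw [hx, hy, geom_sum_succ]
  ring

theorem mul_one_sub_sum_mul_sum_eq_of_first_step {R : Type*} [CommRing R] {α X0 X1 Xm : R}
    {m n : ℕ} (h0 : X0 = α * (X1 + 1) + (1 - α) * (Xm + 1))
    (h1 : X1 = (∑ k ∈ Finset.Icc 1 m, α ^ k)
        + (1 - α) * (1 + Xm) * (∑ k ∈ Finset.range m, α ^ k))
    (hm : Xm = (∑ k ∈ Finset.Icc 1 n, (1 - α) ^ k)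
        + α * (1 + X1) * (∑ k ∈ Finset.range n, (1 - α) ^ k)) :
    X0 * (1 - (∑ j ∈ Finset.Icc 1 m, α ^ j) * (∑ j ∈ Finset.Icc 1 n, (1 - α) ^ j))
      = (∑ j ∈ Finset.range (m + 1), α ^ j) * (∑ j ∈ Finset.range (n + 1), (1 - α) ^ j) := by
  have hS := eq_geom_sum_mul_of_first_step h0 h1
  have hT := eq_geom_sum_mul_of_first_step (h0.trans (add_comm _ _)) hm
  rw [sum_Icc_one_pow_eq_geom_sum_sub_one, sum_Icc_one_pow_eq_geom_sum_sub_one]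
  set S := ∑ j ∈ Finset.range (m + 1), α ^ j
  set T := ∑ j ∈ Finset.range (n + 1), (1 - α) ^ j
  have hcofactors : (α + (1 - α) * (Xm + 1)) + (1 - α + α * (X1 + 1)) = 1 + X0 := by
    rw [h0]; ring
  have hsum : X0 * T + X0 * S = S * T * (1 + X0) := by
    rw [← hcofactors]
    linear_combination T * hS + S * hT
  linear_combination hsum

theorem stmt_1_general {K : Type*} [Field K] [LinearOrder K] [IsStrictOrderedRing K]
    {α : K} (hα0 : 0 ≤ α) (hα1 : α ≤ 1) {s f : ℕ} (hs : 0 < s) (hf : 0 < f) {X0 X1 Xm : K}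
    (h0 : X0 = α * (X1 + 1) + (1 - α) * (Xm + 1))
    (h1 : X1 = (∑ k ∈ Finset.Icc 1 (s - 1), α ^ k)
        + (1 - α) * (1 + Xm) * (∑ k ∈ Finset.range (s - 1), α ^ k))
    (hm : Xm = (∑ k ∈ Finset.Icc 1 (f - 1), (1 - α) ^ k)
        + α * (1 + X1) * (∑ k ∈ Finset.range (f - 1), (1 - α) ^ k)) :
    X0 = ((∑ j ∈ Finset.range s, α ^ j) * (∑ j ∈ Finset.range f, (1 - α) ^ j))
        / (1 - (∑ j ∈ Finset.Icc 1 (s - 1), α ^ j)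
              * (∑ j ∈ Finset.Icc 1 (f - 1), (1 - α) ^ j)) := by
  have hden := sub_pos.mpr
    (sum_Icc_one_pow_mul_sum_Icc_one_one_sub_pow_lt_one hα0 hα1 (s - 1) (f - 1))
  have hmul := mul_one_sub_sum_mul_sum_eq_of_first_step h0 h1 hm
  rw [Nat.sub_add_cancel hs, Nat.sub_add_cancel hf] at hmul
  exact eq_div_of_mul_eq hden.ne' hmul

/-- The three linear equations of ARF at an intermediate rate determine
`X0 = (∑_{j=0}^{s-1} α^j)(∑_{j=0}^{f-1} (1-α)^j) / (1 - (∑_{j=1}^{s-1} α^j)(∑_{j=1}^{f-1}(1-α)^j))`. -/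
theorem stmt_1 (α : ℝ) (hα0 : 0 < α) (hα1 : α < 1) (s f : ℕ) (hs : 1 < s) (hf : 1 < f)
    (X0 X1 Xm : ℝ)
    (h0 : X0 = α * (X1 + 1) + (1 - α) * (Xm + 1))
    (h1 : X1 = (∑ k ∈ Finset.Icc 1 (s - 1), α ^ k)
        + (1 - α) * (1 + Xm) * (∑ k ∈ Finset.range (s - 1), α ^ k))
    (hm : Xm = (∑ k ∈ Finset.Icc 1 (f - 1), (1 - α) ^ k)
        + α * (1 + X1) * (∑ k ∈ Finset.range (f - 1), (1 - α) ^ k)) :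
    X0 = ((∑ j ∈ Finset.range s, α ^ j) * (∑ j ∈ Finset.range f, (1 - α) ^ j))
        / (1 - (∑ j ∈ Finset.Icc 1 (s - 1), α ^ j)
              * (∑ j ∈ Finset.Icc 1 (f - 1), (1 - α) ^ j)) :=
  stmt_1_general hα0.le hα1.le (Nat.zero_lt_of_lt hs) (Nat.zero_lt_of_lt hf) h0 h1 hm
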